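/- The expected cost of the optimal policy equals its expected total revenue: E[C(π*)] = E[μ*], where μ* = Σ_{e ∈ E} μ(e). -/

import Mathlib

/-!
Common framework for the Stochastic Submodular Cover problem
(Hellerstein–Kletenik–Parthasarathy, "A Tight Bound for Stochastic Submodular Cover").
-/

namespace SSC

open Finset
open scoped Classical

noncomputable section

variable {E O : Type*}

/-- A subrealization assigns to each item either a state or `none` (unassigned).
A realization corresponds to the case where every item is assigned. -/
abbrev Sub (E O : Type*) := E → Option O

/-- `subext ψ ψ'` means `ψ ⊆ ψ'` as partial assignments of states to items. -/
def subext (ψ ψ' : Sub E O) : Prop := ∀ e o, ψ e = some o → ψ' e = some o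

/-- `ssubext ψ ψ'` means `ψ ⊂ ψ'` (strict extension). -/
def ssubext (ψ ψ' : Sub E O) : Prop := subext ψ ψ' ∧ ψ ≠ ψ'

/-- Extend a subrealization `ψ` by assigning state `o` to item `e`. -/
def updateSub [DecidableEq E] (ψ : Sub E O) (e : E) (o : O) : Sub E O :=
  fun e' => if e' = e then some o else ψ e'

/-- View a (full) realization as a subrealization. -/
def toSub (φ : E → O) : Sub E O := fun e => some (φ e)

variable [Fintype E] [DecidableEq E] [Fintype O] [DecidableEq O]

/-- An instance of the Stochastic Submodular Cover problem: positive item costs `c`,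
a probability mass function `p` on realizations with mutually independent item states,
and a utility function `f` on subrealizations which is zero on the empty subrealization,
nonnegative, monotone and submodular (pointwise polymatroid), and equal to the goal
value `Q > 0` on every full realization (coverability). -/
structure Problem (E O : Type*) [Fintype E] [DecidableEq E] [Fintype O] [DecidableEq O] where
  c : E → ℝ
  c_pos : ∀ e, 0 < c e
  p : (E → O) → ℝ
  p_nonneg : ∀ φ, 0 ≤ p φ
  p_sum : ∑ φ : E → O, p φ = 1
  indep : ∀ φ : E → O, p φ = ∏ e : E, ∑ φ' : E → O, if φ' e = φ e then p φ' else 0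
  f : Sub E O → ℝ
  f_nonneg : ∀ ψ, 0 ≤ f ψ
  f_empty : f (fun _ => none) = 0
  f_mono : ∀ ψ ψ' : Sub E O, subext ψ ψ' → f ψ ≤ f ψ'
  f_submod : ∀ (ψ ψ' : Sub E O) (e : E) (o : O), subext ψ ψ' → ψ' e = none →
      f (updateSub ψ' e o) - f ψ' ≤ f (updateSub ψ e o) - f ψ
  Q : ℝ
  Q_pos : 0 < Q
  f_cover : ∀ φ : E → O, f (toSub φ) = Q

variable (M : Problem E O)

/-- Expectation of a random variable `X` with respect to the random realization `Φ`. -/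
def Ex (X : (E → O) → ℝ) : ℝ := ∑ φ : E → O, M.p φ * X φ

/-- Probability of an event `A` of the random realization `Φ`. -/
def Pr (A : (E → O) → Prop) : ℝ := ∑ φ : E → O, if A φ then M.p φ else 0

/-- Conditional expectation `E[X | A]`. -/
def cEx (X : (E → O) → ℝ) (A : (E → O) → Prop) : ℝ :=
  (∑ φ : E → O, if A φ then M.p φ * X φ else 0) / Pr M A

/-- The random marginal increase in utility `F_ψ(e)` from observing the state of `e`. -/
def Fm (ψ : Sub E O) (e : E) (φ : E → O) : ℝ := M.f (updateSub ψ e (φ e)) - M.f ψ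

/-- The unit price `υ(e|ψ) = c(e) / E[F_ψ(e)]`. -/
def price (ψ : Sub E O) (e : E) : ℝ := M.c e / Ex M (Fm M ψ e)

/-- An adaptive covering policy: at every subrealization `ψ` with `f ψ < Q` it selects an
item outside `dom ψ`. -/
def IsPolicy (π : Sub E O → E) : Prop := ∀ ψ : Sub E O, M.f ψ < M.Q → ψ (π ψ) = none

/-- The `α`-approximate adaptive greedy policy: at every `ψ` with `f ψ < Q` the unit price of
the selected item `σ ψ` is at most `α` times the minimum unit price, i.e.
`υ(σ ψ | ψ) ≤ α · υ(e | ψ)` for every `e ∉ dom ψ`, written multiplicatively so that infinite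
unit prices (zero expected marginal utility) are handled correctly. -/
def IsGreedy (α : ℝ) (σ : Sub E O → E) : Prop :=
  IsPolicy M σ ∧
    ∀ ψ : Sub E O, M.f ψ < M.Q → ∀ e : E, ψ e = none →
      M.c (σ ψ) * Ex M (Fm M ψ e) ≤ α * M.c e * Ex M (Fm M ψ (σ ψ))

/-- One step of executing policy `π` on realization `φ`. -/
def stepPol (π : Sub E O → E) (φ : E → O) (ψ : Sub E O) : Sub E O :=
  if M.f ψ < M.Q then updateSub ψ (π ψ) (φ (π ψ)) else ψ

/-- The subrealization reached after `n` steps of executing `π` on `φ`. -/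
def execAux (π : Sub E O → E) (φ : E → O) : ℕ → Sub E O
  | 0 => fun _ => none
  | n + 1 => stepPol M π φ (execAux π φ n)

/-- The cover `Ψ(π)` constructed by executing `π` on realization `φ`. -/
def cover (π : Sub E O → E) (φ : E → O) : Sub E O := execAux M π φ (Fintype.card E)

/-- `ψ` is visited when executing `π` on realization `φ`. -/
def visits (π : Sub E O → E) (φ : E → O) (ψ : Sub E O) : Prop := ∃ n, execAux M π φ n = ψ

/-- The set `S(π)` of items selected when executing `π` on `φ`. -/
def Ssel (π : Sub E O → E) (φ : E → O) : Finset E :=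
  Finset.univ.filter fun e => cover M π φ e ≠ none

/-- The cost `C(π)` incurred when executing `π` on `φ`. -/
def C (π : Sub E O → E) (φ : E → O) : ℝ := ∑ e ∈ Ssel M π φ, M.c e

/-- An adaptive covering policy of minimum expected cost. -/
def IsOptimal (π : Sub E O → E) : Prop :=
  IsPolicy M π ∧ ∀ π' : Sub E O → E, IsPolicy M π' → Ex M (C M π) ≤ Ex M (C M π')

/-- `N(π)`: the non-leaf nodes of the decision tree of `π` — subrealizations with
`f ψ < Q` that are visited with positive probability. -/
def Nnodes (π : Sub E O → E) : Finset (Sub E O) :=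
  Finset.univ.filter fun ψ => M.f ψ < M.Q ∧ 0 < Pr M fun φ => visits M π φ ψ

/-- The event `ψ ↝ i`, for a marker located at utility value `b = f(ρ_i)`:
`ψ` is the last subrealization visited by `σ` (on the given realization) whose
utility is at most `b`. -/
def leadsTo (σ : Sub E O → E) (b : ℝ) (ψ : Sub E O) (φ : E → O) : Prop :=
  visits M σ φ ψ ∧ M.f ψ ≤ b ∧
    ∀ ψ' : Sub E O, visits M σ φ ψ' → M.f ψ' ≤ b → subext ψ' ψ

/-- The revenue `λ_i = υ_ψ · ε_i` collected by `σ` from the marker located at utility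
value `b = f(ρ_i)` with interval length `εi`, where `ψ` is the unique subrealization
with `ψ ↝ i`. -/
def lam (σ : Sub E O → E) (b εi : ℝ) (φ : E → O) : ℝ :=
  ∑ ψ : Sub E O, if leadsTo M σ b ψ φ then price M ψ (σ ψ) * εi else 0

/-- The revenue `μ(e)` collected by the optimal policy `πs` from item `e`
(relative to the greedy policy `σ`, both executed on the same realization). -/
def mu (σ πs : Sub E O → E) (e : E) (φ : E → O) : ℝ :=
  if e ∈ Ssel M πs φ then
    if e ∈ Ssel M σ φ then
      ∑ ψ : Sub E O,
        if visits M σ φ ψ ∧ M.f ψ < M.Q ∧ σ ψ = e then price M ψ e * Fm M ψ e φ else 0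
    else M.c e
  else 0

/-- The total revenue `μ*` collected by the optimal policy. -/
def muStar (σ πs : Sub E O → E) (φ : E → O) : ℝ := ∑ e : E, mu M σ πs e φ

/-- Replay of the internal state of policy `πs` in the second stage of the hybrid policy:
starting from the empty subrealization, repeatedly query `πs`; an item whose state is
already recorded in `ψ'` is not re-selected, its recorded state being used instead. -/
def replayAux (πs : Sub E O → E) (ψ' : Sub E O) : ℕ → Sub E O
  | 0 => fun _ => none
  | n + 1 =>
    if M.f (replayAux πs ψ' n) < M.Q then
      match ψ' (πs (replayAux πs ψ' n)) with
      | some o => updateSub (replayAux πs ψ' n) (πs (replayAux πs ψ' n)) o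
      | none => replayAux πs ψ' n
    else replayAux πs ψ' n

/-- The hybrid policy `π^ψ0`: follow `σ` until `ψ0` is visited, then switch to executing
`πs` from the root of its tree, never re-selecting an item of `dom ψ0` and using the
state recorded in `ψ0` instead. -/
def hybrid (σ πs : Sub E O → E) (ψ0 : Sub E O) : Sub E O → E := fun ψ' =>
  if subext ψ0 ψ' then πs (replayAux M πs ψ' (Fintype.card E)) else σ ψ'

/-- `δ⁺_ψ0(e)`: the marginal utility obtained by the hybrid policy `π^ψ0` when it selects
`e` during its second stage, and `0` if `e` is not selected in the second stage. -/
def deltaPlus (σ πs : Sub E O → E) (ψ0 : Sub E O) (e : E) (φ : E → O) : ℝ :=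
  ∑ ψ' : Sub E O,
    if subext ψ0 ψ' ∧ visits M (hybrid M σ πs ψ0) φ ψ' ∧
        ssubext ψ' (cover M (hybrid M σ πs ψ0) φ) ∧ hybrid M σ πs ψ0 ψ' = e
    then Fm M ψ' e φ else 0


/-! ### Helper lemmas -/

lemma updateSub_ne_none (ψ : Sub E O) (e e' : E) (o : O) (h : ψ e' ≠ none) :
    updateSub ψ e o e' ≠ none := by
  unfold updateSub
  split_ifs
  · simp
  · exact h

lemma execAux_succ_ne_none (π : Sub E O → E) (φ : E → O) (n : ℕ) (e : E)
    (h : execAux M π φ n e ≠ none) : execAux M π φ (n + 1) e ≠ none := by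
  simp only [execAux, stepPol]
  split_ifs
  · exact updateSub_ne_none _ _ _ _ h
  · exact h

lemma execAux_mono_ne_none (π : Sub E O → E) (φ : E → O) {n m : ℕ} (hnm : n ≤ m) (e : E)
    (h : execAux M π φ n e ≠ none) : execAux M π φ m e ≠ none := by
  induction m, hnm using Nat.le_induction with
  | base => exact h
  | succ k _ ih => exact execAux_succ_ne_none M π φ k e ih

lemma execAux_selected (π : Sub E O → E) (φ : E → O) (n : ℕ) (e : E)
    (hf : M.f (execAux M π φ n) < M.Q) (he : π (execAux M π φ n) = e) :
    execAux M π φ (n + 1) e ≠ none := by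
  simp only [execAux, stepPol, if_pos hf, updateSub, he, if_true]
  simp

lemma execAux_congr (π : Sub E O → E) (φ φ' : E → O) (e : E)
    (hφ : ∀ e', e' ≠ e → φ' e' = φ e') (n : ℕ) (h : execAux M π φ n e = none) :
    execAux M π φ' n = execAux M π φ n := by
  induction n with
  | zero => rfl
  | succ n ih =>
    have h0 : execAux M π φ n e = none := by
      by_contra hc
      exact execAux_succ_ne_none M π φ n e hc h
    have ih := ih h0
    simp only [execAux, ih, stepPol]
    split_ifs with hf
    · have hne : π (execAux M π φ n) ≠ e := fun he => execAux_selected M π φ n e hf he h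
      rw [hφ _ hne]
    · rfl

lemma mem_Ssel_iff (π : Sub E O → E) (φ : E → O) (e : E) :
    e ∈ Ssel M π φ ↔ execAux M π φ (Fintype.card E) e ≠ none := by
  unfold Ssel cover
  refine (Finset.mem_filter).trans ?_
  exact ⟨fun h => h.2, fun h => ⟨Finset.mem_univ _, h⟩⟩

lemma mem_Ssel_congr (π : Sub E O → E) (φ φ' : E → O) (e : E)
    (hφ : ∀ e', e' ≠ e → φ' e' = φ e') : e ∈ Ssel M π φ' ↔ e ∈ Ssel M π φ := by
  rw [mem_Ssel_iff, mem_Ssel_iff]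
  refine not_congr ⟨fun h => ?_, fun h => ?_⟩
  · rw [execAux_congr M π φ' φ e (fun e' he' => (hφ e' he').symm) _ h]; exact h
  · rw [execAux_congr M π φ φ' e hφ _ h]; exact h

lemma visits_congr (π : Sub E O → E) (φ φ' : E → O) (e : E)
    (hφ : ∀ e', e' ≠ e → φ' e' = φ e') (ψ : Sub E O) (hψ : ψ e = none) :
    visits M π φ' ψ ↔ visits M π φ ψ := by
  constructor
  · rintro ⟨n, rfl⟩
    exact ⟨n, execAux_congr M π φ' φ e (fun e' he' => (hφ e' he').symm) _ hψ⟩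
  · rintro ⟨n, rfl⟩
    exact ⟨n, execAux_congr M π φ φ' e hφ _ hψ⟩

lemma exists_selected (π : Sub E O → E) (φ : E → O) (e : E) (n : ℕ)
    (h : execAux M π φ n e ≠ none) :
    ∃ k, M.f (execAux M π φ k) < M.Q ∧ π (execAux M π φ k) = e := by
  induction n with
  | zero => exact absurd rfl h
  | succ n ih =>
    by_cases h0 : execAux M π φ n e = none
    · refine ⟨n, ?_⟩
      simp only [execAux, stepPol] at h
      split_ifs at h with hf
      · refine ⟨hf, ?_⟩
        by_contra hne
        apply h
        simp only [updateSub]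
        rw [if_neg (fun h' => hne h'.symm)]
        exact h0
      · exact absurd h0 h
    · exact ih h0

lemma unique_selected (π : Sub E O → E) (hπ : IsPolicy M π) (φ : E → O) (e : E) (n m : ℕ)
    (hn : M.f (execAux M π φ n) < M.Q) (hne : π (execAux M π φ n) = e)
    (hm : M.f (execAux M π φ m) < M.Q) (hme : π (execAux M π φ m) = e) : n = m := by
  have key : ∀ n m : ℕ, M.f (execAux M π φ n) < M.Q → π (execAux M π φ n) = e →
      M.f (execAux M π φ m) < M.Q → π (execAux M π φ m) = e → ¬ n < m := by
    intro n m hn hne hm hme hlt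
    have h1 := execAux_mono_ne_none M π φ (Nat.succ_le_of_lt hlt) e
      (execAux_selected M π φ n e hn hne)
    have h2 := hπ _ hm
    rw [hme] at h2
    exact h1 h2
  have h1 := key n m hn hne hm hme
  have h2 := key m n hm hme hn hne
  omega

lemma sum_selected (π : Sub E O → E) (hπ : IsPolicy M π) (φ : E → O) (e : E) (c : ℝ)
    (h : e ∈ Ssel M π φ) :
    (∑ ψ : Sub E O, if visits M π φ ψ ∧ M.f ψ < M.Q ∧ π ψ = e then c else 0) = c := by
  rw [mem_Ssel_iff] at h
  obtain ⟨k, hk, hke⟩ := exists_selected M π φ e _ h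
  rw [Finset.sum_eq_single (execAux M π φ k)]
  · rw [if_pos ⟨⟨k, rfl⟩, hk, hke⟩]
  · rintro ψ - hne
    rw [if_neg]
    rintro ⟨⟨n, rfl⟩, hn, hne'⟩
    exact hne (by rw [unique_selected M π hπ φ e n k hn hne' hk hke])
  · intro h; exact absurd (Finset.mem_univ _) h

/-- Swap coordinate `e` between two realizations. -/
def swapAt (e : E) (x : (E → O) × (E → O)) : (E → O) × (E → O) :=
  (Function.update x.1 e (x.2 e), Function.update x.2 e (x.1 e))

lemma swapAt_invol (e : E) : Function.Involutive (swapAt (O := O) e) := by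
  rintro ⟨a, b⟩
  simp [swapAt]

lemma p_swap (e : E) (a b : E → O) :
    M.p (Function.update a e (b e)) * M.p (Function.update b e (a e)) = M.p a * M.p b := by
  rw [M.indep (Function.update a e (b e)), M.indep (Function.update b e (a e)),
    M.indep a, M.indep b, ← Finset.prod_mul_distrib, ← Finset.prod_mul_distrib]
  refine Finset.prod_congr rfl fun e' _ => ?_
  by_cases h : e' = e
  · subst h
    simp only [Function.update_self]
    exact mul_comm _ _
  · simp only [Function.update_of_ne h]

lemma Ex_mul_indep (e : E) (X Y : (E → O) → ℝ)
    (hX : ∀ φ φ' : E → O, φ e = φ' e → X φ = X φ')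
    (hY : ∀ φ φ' : E → O, (∀ e', e' ≠ e → φ' e' = φ e') → Y φ' = Y φ) :
    Ex M (fun φ => X φ * Y φ) = Ex M X * Ex M Y := by
  have h1 : Ex M X * Ex M Y =
      ∑ x : (E → O) × (E → O), (M.p x.1 * X x.1) * (M.p x.2 * Y x.2) := by
    rw [Fintype.sum_prod_type]
    simp only [Ex, Finset.sum_mul_sum]
  have h2 : Ex M (fun φ => X φ * Y φ) =
      ∑ x : (E → O) × (E → O), M.p x.1 * (M.p x.2 * (X x.2 * Y x.2)) := by
    rw [Fintype.sum_prod_type]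
    simp only [← Finset.mul_sum, ← Finset.sum_mul, M.p_sum, one_mul]
    rfl
  rw [h1, h2, ← Equiv.sum_comp (swapAt_invol (O := O) e).toPerm
    (fun x : (E → O) × (E → O) => (M.p x.1 * X x.1) * (M.p x.2 * Y x.2))]
  refine Finset.sum_congr rfl fun x _ => ?_
  obtain ⟨a, b⟩ := x
  have hs := p_swap M e a b
  have hx : X (Function.update a e (b e)) = X b := hX _ _ (by simp)
  have hy : Y (Function.update b e (a e)) = Y b :=
    hY _ _ (fun e' he' => by simp [Function.update_of_ne he'])
  simp only [Function.Involutive.coe_toPerm, swapAt, hx, hy]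
  linear_combination (-(X b * Y b)) * hs

lemma subext_updateSub (ψ : Sub E O) (e : E) (o : O) (h : ψ e = none) :
    subext ψ (updateSub ψ e o) := by
  intro e' o' h'
  unfold updateSub
  split_ifs with he
  · subst he; rw [h] at h'; cases h'
  · exact h'

lemma Fm_nonneg (ψ : Sub E O) (e : E) (φ : E → O) (h : ψ e = none) : 0 ≤ Fm M ψ e φ :=
  sub_nonneg.2 (M.f_mono _ _ (subext_updateSub ψ e _ h))

/-- Fill `ψ` with the states of `φ` on the items of `A` outside the domain of `ψ`. -/
def fillSub (ψ : Sub E O) (φ : E → O) (A : Finset E) : Sub E O :=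
  fun e => if ψ e = none ∧ e ∈ A then some (φ e) else ψ e

lemma f_fill (ψ : Sub E O) (φ : E → O) (h : ∀ e, ψ e = none → Fm M ψ e φ = 0)
    (A : Finset E) : M.f (fillSub ψ φ A) ≤ M.f ψ := by
  induction A using Finset.induction_on with
  | empty =>
    have : fillSub ψ φ ∅ = ψ := by funext e; simp [fillSub]
    rw [this]
  | insert a A ha ih =>
    by_cases hψ : ψ a = none
    · have h1 : fillSub ψ φ (insert a A) = updateSub (fillSub ψ φ A) a (φ a) := by
        funext e
        by_cases he : e = a
        · subst he; simp [fillSub, updateSub, hψ]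
        · simp [fillSub, updateSub, he]
      have h2 : subext ψ (fillSub ψ φ A) := by
        intro e o he
        simp [fillSub, he]
      have h3 := M.f_submod ψ (fillSub ψ φ A) a (φ a) h2 (by simp [fillSub, hψ, ha])
      have h4 := h a hψ
      unfold Fm at h4
      rw [h1]
      linarith
    · have : fillSub ψ φ (insert a A) = fillSub ψ φ A := by
        funext e
        by_cases he : e = a
        · subst he; simp [fillSub, hψ]
        · simp [fillSub, he]
      rw [this]; exact ih

lemma greedy_Ex_ne_zero {α : ℝ} {σ : Sub E O → E} (hσ : IsGreedy M α σ) (ψ : Sub E O)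
    (hψ : M.f ψ < M.Q) : Ex M (Fm M ψ (σ ψ)) ≠ 0 := by
  intro h0
  obtain ⟨φ, hφ⟩ : ∃ φ, 0 < M.p φ := by
    by_contra hc
    push Not at hc
    have h1 := M.p_sum
    have h2 : ∑ φ : E → O, M.p φ ≤ 0 := Finset.sum_nonpos fun φ _ => hc φ
    linarith
  have hz : ∀ e, ψ e = none → Fm M ψ e φ = 0 := by
    intro e he
    have h1 := hσ.2 ψ hψ e he
    rw [h0, mul_zero] at h1
    have hnn : ∀ φ' ∈ Finset.univ, 0 ≤ M.p φ' * Fm M ψ e φ' := fun φ' _ =>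
      mul_nonneg (M.p_nonneg _) (Fm_nonneg M ψ e φ' he)
    have h2 : Ex M (Fm M ψ e) = 0 := by
      apply le_antisymm
      · by_contra hc
        push Not at hc
        have := mul_pos (M.c_pos (σ ψ)) hc
        linarith
      · exact Finset.sum_nonneg hnn
    have h3 := (Finset.sum_eq_zero_iff_of_nonneg hnn).1 h2 φ (Finset.mem_univ _)
    rcases mul_eq_zero.1 h3 with h | h
    · exact absurd h hφ.ne'
    · exact h
  have h1 := f_fill M ψ φ hz Finset.univ
  have h2 : fillSub ψ φ Finset.univ = toSub fun e => (ψ e).getD (φ e) := by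
    funext e
    cases h : ψ e <;> simp [fillSub, toSub, h]
  rw [h2, M.f_cover] at h1
  linarith

lemma Ex_sum {ι : Type*} (s : Finset ι) (X : ι → (E → O) → ℝ) :
    Ex M (fun φ => ∑ i ∈ s, X i φ) = ∑ i ∈ s, Ex M (X i) := by
  simp only [Ex, Finset.mul_sum]
  exact Finset.sum_comm

lemma Ex_add (X Y : (E → O) → ℝ) : Ex M (fun φ => X φ + Y φ) = Ex M X + Ex M Y := by
  simp only [Ex, mul_add, Finset.sum_add_distrib]

lemma Ex_mu {α : ℝ} {σ : Sub E O → E} (hσ : IsGreedy M α σ) (πs : Sub E O → E) (e : E) :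
    Ex M (mu M σ πs e) = Ex M (fun φ => if e ∈ Ssel M πs φ then M.c e else 0) := by
  let Y : Sub E O → (E → O) → ℝ := fun ψ φ =>
    if (e ∈ Ssel M πs φ ∧ e ∈ Ssel M σ φ) ∧ visits M σ φ ψ ∧ M.f ψ < M.Q ∧ σ ψ = e
    then 1 else 0
  let Z : (E → O) → ℝ := fun φ => if e ∈ Ssel M πs φ ∧ e ∉ Ssel M σ φ then M.c e else 0
  have h1 : mu M σ πs e =
      fun φ => (∑ ψ : Sub E O, (price M ψ e * Fm M ψ e φ) * Y ψ φ) + Z φ := by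
    funext φ
    by_cases ha : e ∈ Ssel M πs φ <;> by_cases hb : e ∈ Ssel M σ φ <;>
      simp [mu, Y, Z, ha, hb]
  have h2 : (fun φ => if e ∈ Ssel M πs φ then M.c e else 0) =
      fun φ => (∑ ψ : Sub E O, M.c e * Y ψ φ) + Z φ := by
    funext φ
    by_cases ha : e ∈ Ssel M πs φ
    · by_cases hb : e ∈ Ssel M σ φ
      · have := sum_selected M σ hσ.1 φ e (M.c e) hb
        simp only [Y, Z, ha, hb, mul_ite, mul_one, mul_zero, true_and, not_true, and_false,
          if_false, add_zero, if_true]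
        exact this.symm
      · simp [Y, Z, ha, hb]
    · simp [Y, Z, ha]
  rw [h1, h2, Ex_add, Ex_add, Ex_sum, Ex_sum]
  congr 1
  refine Finset.sum_congr rfl fun ψ _ => ?_
  by_cases hc : M.f ψ < M.Q ∧ σ ψ = e
  · have hnone : ψ e = none := by
      have := hσ.1 ψ hc.1
      rwa [hc.2] at this
    have hY : ∀ φ φ' : E → O, (∀ e', e' ≠ e → φ' e' = φ e') → Y ψ φ' = Y ψ φ := by
      intro φ φ' h
      simp only [Y, mem_Ssel_congr M πs φ φ' e h, mem_Ssel_congr M σ φ φ' e h,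
        visits_congr M σ φ φ' e h ψ hnone]
    have hne : Ex M (Fm M ψ e) ≠ 0 := by
      have := greedy_Ex_ne_zero M hσ ψ hc.1
      rwa [hc.2] at this
    rw [Ex_mul_indep M e (fun φ => price M ψ e * Fm M ψ e φ) (Y ψ) _ hY,
      Ex_mul_indep M e (fun _ => M.c e) (Y ψ) (fun _ _ _ => rfl) hY]
    · congr 1
      have e1 : Ex M (fun φ => price M ψ e * Fm M ψ e φ) = price M ψ e * Ex M (Fm M ψ e) := by
        simp only [Ex, Finset.mul_sum]
        exact Finset.sum_congr rfl fun φ _ => by ring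
      have e2 : Ex M (fun _ => M.c e) = M.c e := by
        simp only [Ex, ← Finset.sum_mul, M.p_sum, one_mul]
      rw [e1, e2, price, div_mul_cancel₀ _ hne]
    · intro φ φ' h
      simp only [Fm, h]
  · have hY0 : ∀ φ, Y ψ φ = 0 := fun φ => if_neg fun h => hc h.2.2
    simp only [hY0, mul_zero]

/-- The expected cost of the optimal policy equals its expected total
revenue: `E[C(π*)] = E[μ*]`. -/
theorem opt_cost_eq_revenue
    (M : Problem E O) (α : ℝ) (hα : 1 ≤ α)
    (σ : Sub E O → E) (hσ : IsGreedy M α σ)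
    (πs : Sub E O → E) (hπs : IsOptimal M πs) :
    Ex M (C M πs) = Ex M (muStar M σ πs) := by
  have h1 : muStar M σ πs = fun φ => ∑ e : E, mu M σ πs e φ := rfl
  have h2 : C M πs = fun φ => ∑ e : E, if e ∈ Ssel M πs φ then M.c e else 0 := by
    funext φ
    simp only [C, Finset.sum_ite_mem, Finset.univ_inter]
  rw [h1, h2, Ex_sum, Ex_sum]
  exact Finset.sum_congr rfl fun e _ => (Ex_mu M hσ πs e).symm

end
end SSC
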